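/- arXiv:1602.00530 — 3 statements merged into one kernel-verified Lean document; each statement's English description precedes it below -/
import Mathlib

section
/- (Locality.) Let Q₁ and Q₂ be two open subsets of (0,∞)×X and let F be continuous on (Q₁∪Q₂)×ℝ×ℝ, even and convex in p. If u is a metric viscosity subsolution of F(z,|Du|,∂ₜu)=0 in Q₁ and also a metric viscosity subsolution of F(z,|Du|,∂ₜu)=0 in Q₂, then u is a metric viscosity subsolution of F(z,|Du|,∂ₜu)=0 in Q = Q₁∪Q₂. -/
open Filter Metric Set Topology

noncomputable section

/-- A geodesic metric space: any two points are joined by a constant-speed geodesic. -/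
def IsGeodesicSpace (X : Type*) [MetricSpace X] : Prop :=
  ∀ x y : X, ∃ f : ℝ → X, f 0 = x ∧ f 1 = y ∧
    ∀ s ∈ Set.Icc (0:ℝ) 1, ∀ t ∈ Set.Icc (0:ℝ) 1,
      dist (f s) (f t) = |s - t| * dist x y

variable {X : Type*} [MetricSpace X]

/-- Upper local mslope |∇⁺v|(x) = limsup_{y→x} [v(y)-v(x)]₊ / d(y,x). -/
def mslopeUp (v : X → ℝ) (x : X) : ℝ :=
  Filter.limsup (fun y => max (v y - v x) 0 / dist y x) (𝓝[≠] x)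

/-- Lower local mslope |∇⁻v|(x) = limsup_{y→x} [v(y)-v(x)]₋ / d(y,x). -/
def mslopeDown (v : X → ℝ) (x : X) : ℝ :=
  Filter.limsup (fun y => max (v x - v y) 0 / dist y x) (𝓝[≠] x)

/-- Local mslope |∇v|(x) = limsup_{y→x} |v(y)-v(x)| / d(y,x). -/
def mslope (v : X → ℝ) (x : X) : ℝ :=
  Filter.limsup (fun y => |v y - v x| / dist y x) (𝓝[≠] x)

/-- Spatial upper local mslope of a function of time and space. -/
def slopeUpT (u : ℝ × X → ℝ) (z : ℝ × X) : ℝ := mslopeUp (fun y => u (z.1, y)) z.2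

/-- Spatial lower local mslope of a function of time and space. -/
def slopeDownT (u : ℝ × X → ℝ) (z : ℝ × X) : ℝ := mslopeDown (fun y => u (z.1, y)) z.2

/-- Spatial local mslope of a function of time and space. -/
def slopeT (u : ℝ × X → ℝ) (z : ℝ × X) : ℝ := mslope (fun y => u (z.1, y)) z.2

/-- Time derivative ∂ₜu. -/
def timeDeriv (u : ℝ × X → ℝ) (z : ℝ × X) : ℝ := deriv (fun s => u (s, z.2)) z.1

/-- Locally Lipschitz on a set. -/
def LocLipOn {α : Type*} [PseudoMetricSpace α] (s : Set α) (f : α → ℝ) : Prop :=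
  ∀ z ∈ s, ∃ K : NNReal, ∃ t ∈ 𝓝[s] z, LipschitzOnWith K f t

/-- The class 𝒞(Q): locally Lipschitz with (existing) continuous time derivative. -/
def IsCQ (Q : Set (ℝ × X)) (u : ℝ × X → ℝ) : Prop :=
  LocLipOn Q u ∧
  (∀ z ∈ Q, DifferentiableAt ℝ (fun s : ℝ => u (s, z.2)) z.1) ∧
  ContinuousOn (timeDeriv u) Q

/-- The class C̲¹(Q). -/
def IsC1UnderQ (Q : Set (ℝ × X)) (u : ℝ × X → ℝ) : Prop :=
  IsCQ Q u ∧ Set.EqOn (slopeDownT u) (slopeT u) Q ∧ ContinuousOn (slopeT u) Q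

/-- The class C̄¹(Q). -/
def IsC1UpperQ (Q : Set (ℝ × X)) (u : ℝ × X → ℝ) : Prop :=
  IsCQ Q u ∧ Set.EqOn (slopeUpT u) (slopeT u) Q ∧ ContinuousOn (slopeT u) Q

/-- The class 𝒞(U) for stationary problems: locally Lipschitz functions. -/
def IsCU (U : Set X) (v : X → ℝ) : Prop := LocLipOn U v

/-- The class C̲¹(U). -/
def IsC1UnderU (U : Set X) (v : X → ℝ) : Prop :=
  IsCU U v ∧ Set.EqOn (mslopeDown v) (mslope v) U ∧ ContinuousOn (mslope v) U

/-- The class C̄¹(U). -/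
def IsC1UpperU (U : Set X) (v : X → ℝ) : Prop :=
  IsCU U v ∧ Set.EqOn (mslopeUp v) (mslope v) U ∧ ContinuousOn (mslope v) U

/-- F_r(z,p,q) = sup_{p'∈[-1,1]} F(z,p+rp',q) if r ≥ 0, inf if r ≤ 0. -/
def Fr (F : (ℝ × X) → ℝ → ℝ → ℝ) (r : ℝ) (z : ℝ × X) (p q : ℝ) : ℝ :=
  if 0 ≤ r then sSup ((fun p' => F z (p + r * p') q) '' Set.Icc (-1:ℝ) 1)
  else sInf ((fun p' => F z (p + r * p') q) '' Set.Icc (-1:ℝ) 1)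

/-- H_r(x,p) = sup_{p'∈[-1,1]} H(x,p+rp') if r ≥ 0, inf if r ≤ 0. -/
def Hr (H : X → ℝ → ℝ) (r : ℝ) (x : X) (p : ℝ) : ℝ :=
  if 0 ≤ r then sSup ((fun p' => H x (p + r * p')) '' Set.Icc (-1:ℝ) 1)
  else sInf ((fun p' => H x (p + r * p')) '' Set.Icc (-1:ℝ) 1)

/-- Upper semicontinuous envelope (relative to a set) of an extended-real function. -/
def uscEnv {α : Type*} [TopologicalSpace α] (s : Set α) (u : α → EReal) (z : α) : EReal :=
  Filter.limsup u (𝓝[s] z)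

/-- Lower semicontinuous envelope (relative to a set) of an extended-real function. -/
def lscEnv {α : Type*} [TopologicalSpace α] (s : Set α) (u : α → EReal) (z : α) : EReal :=
  Filter.liminf u (𝓝[s] z)

/-- Upper semicontinuous envelope (relative to a set) of a real function. -/
def uscEnvR {α : Type*} [TopologicalSpace α] (s : Set α) (f : α → ℝ) (z : α) : ℝ :=
  Filter.limsup f (𝓝[s] z)

/-- Metric viscosity subsolution of F(z,|Du|,∂ₜu)=0 in Q (Gangbo–Święch). -/
def IsSubsol (Q : Set (ℝ × X)) (F : (ℝ × X) → ℝ → ℝ → ℝ) (u : ℝ × X → EReal) : Prop :=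
  ∀ ψ₁ ψ₂ : ℝ × X → ℝ, IsC1UnderQ Q ψ₁ → IsCQ Q ψ₂ → ∀ z ∈ Q,
    (∃ R > 0, uscEnv Q u z = ((ψ₁ z + ψ₂ z : ℝ) : EReal) ∧
      ∀ w ∈ Metric.ball z R ∩ Q, uscEnv Q u w ≤ ((ψ₁ w + ψ₂ w : ℝ) : EReal)) →
    Fr F (-(uscEnvR Q (slopeT ψ₂) z)) z (slopeT ψ₁ z)
      (timeDeriv (fun w => ψ₁ w + ψ₂ w) z) ≤ 0

/-- Metric viscosity supersolution of F(z,|Du|,∂ₜu)=0 in Q (Gangbo–Święch). -/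
def IsSupersol (Q : Set (ℝ × X)) (F : (ℝ × X) → ℝ → ℝ → ℝ) (u : ℝ × X → EReal) : Prop :=
  ∀ ψ₁ ψ₂ : ℝ × X → ℝ, IsC1UpperQ Q ψ₁ → IsCQ Q ψ₂ → ∀ z ∈ Q,
    (∃ R > 0, lscEnv Q u z = ((ψ₁ z + ψ₂ z : ℝ) : EReal) ∧
      ∀ w ∈ Metric.ball z R ∩ Q, ((ψ₁ w + ψ₂ w : ℝ) : EReal) ≤ lscEnv Q u w) →
    0 ≤ Fr F (uscEnvR Q (slopeT ψ₂) z) z (slopeT ψ₁ z)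
      (timeDeriv (fun w => ψ₁ w + ψ₂ w) z)

/-- Metric viscosity solution. -/
def IsSol (Q : Set (ℝ × X)) (F : (ℝ × X) → ℝ → ℝ → ℝ) (u : ℝ × X → EReal) : Prop :=
  IsSubsol Q F u ∧ IsSupersol Q F u

/-- Metric viscosity subsolution of the stationary equation H(x,|Dv|)=0 in U. -/
def IsSubsolS (U : Set X) (H : X → ℝ → ℝ) (v : X → EReal) : Prop :=
  ∀ ψ₁ ψ₂ : X → ℝ, IsC1UnderU U ψ₁ → IsCU U ψ₂ → ∀ x ∈ U,
    (∃ R > 0, uscEnv U v x = ((ψ₁ x + ψ₂ x : ℝ) : EReal) ∧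
      ∀ w ∈ Metric.ball x R ∩ U, uscEnv U v w ≤ ((ψ₁ w + ψ₂ w : ℝ) : EReal)) →
    Hr H (-(uscEnvR U (mslope ψ₂) x)) x (mslope ψ₁ x) ≤ 0

/-- Metric viscosity supersolution of the stationary equation H(x,|Dv|)=0 in U. -/
def IsSupersolS (U : Set X) (H : X → ℝ → ℝ) (v : X → EReal) : Prop :=
  ∀ ψ₁ ψ₂ : X → ℝ, IsC1UpperU U ψ₁ → IsCU U ψ₂ → ∀ x ∈ U,
    (∃ R > 0, lscEnv U v x = ((ψ₁ x + ψ₂ x : ℝ) : EReal) ∧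
      ∀ w ∈ Metric.ball x R ∩ U, ((ψ₁ w + ψ₂ w : ℝ) : EReal) ≤ lscEnv U v w) →
    0 ≤ Hr H (uscEnvR U (mslope ψ₂) x) x (mslope ψ₁ x)

/-- Metric viscosity solution of the stationary equation. -/
def IsSolS (U : Set X) (H : X → ℝ → ℝ) (v : X → EReal) : Prop :=
  IsSubsolS U H v ∧ IsSupersolS U H v

/-- `ψ` touches the upper semicontinuous envelope of `u` on `s` from above at `z`, that is,
`u* - ψ` attains a zero local maximum at `z`. The neighbourhood filter `𝓝[s] z` stands for the
small balls around `z`, so that the notion makes sense in any topological space. -/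
def TouchesFromAbove {α : Type*} [TopologicalSpace α] (s : Set α) (u : α → EReal) (ψ : α → ℝ)
    (z : α) : Prop :=
  uscEnv s u z = (ψ z : EReal) ∧ ∀ᶠ w in 𝓝[s] z, uscEnv s u w ≤ (ψ w : EReal)

/-- The subsolution property at a single point `z`: the viscosity inequality holds for all test
functions on `Q` that touch `u*` from above at `z`. -/
def IsSubsolAt (Q : Set (ℝ × X)) (F : (ℝ × X) → ℝ → ℝ → ℝ) (u : ℝ × X → EReal)
    (z : ℝ × X) : Prop :=
  ∀ ψ₁ ψ₂ : ℝ × X → ℝ, IsC1UnderQ Q ψ₁ → IsCQ Q ψ₂ →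
    TouchesFromAbove Q u (fun w => ψ₁ w + ψ₂ w) z →
    Fr F (-(uscEnvR Q (slopeT ψ₂) z)) z (slopeT ψ₁ z)
      (timeDeriv (fun w => ψ₁ w + ψ₂ w) z) ≤ 0

section Envelopes

variable {α : Type*} [TopologicalSpace α] {s t : Set α} {z : α}

lemma uscEnv_congr_set (hst : s =ᶠ[𝓝 z] t) (u : α → EReal) : uscEnv s u z = uscEnv t u z := by
  rw [uscEnv, uscEnv, nhdsWithin_eq_iff_eventuallyEq.2 hst]

lemma uscEnvR_congr_set (hst : s =ᶠ[𝓝 z] t) (f : α → ℝ) : uscEnvR s f z = uscEnvR t f z := by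
  rw [uscEnvR, uscEnvR, nhdsWithin_eq_iff_eventuallyEq.2 hst]

lemma TouchesFromAbove.congr_set {u : α → EReal} {ψ : α → ℝ} (h : TouchesFromAbove s u ψ z)
    (hst : s =ᶠ[𝓝 z] t) : TouchesFromAbove t u ψ z := by
  refine ⟨uscEnv_congr_set hst u ▸ h.1, ?_⟩
  have hle : ∀ᶠ w in 𝓝[t] z, uscEnv s u w ≤ (ψ w : EReal) :=
    nhdsWithin_eq_iff_eventuallyEq.2 hst ▸ h.2
  have hst_near : ∀ᶠ w in 𝓝[t] z, s =ᶠ[𝓝 w] t :=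
    hst.eventuallyEq_nhds.filter_mono nhdsWithin_le_nhds
  filter_upwards [hle, hst_near] with w hw hstw
  exact uscEnv_congr_set hstw u ▸ hw

end Envelopes

lemma touchesFromAbove_iff_exists_ball {α : Type*} [PseudoMetricSpace α] {s : Set α}
    {u : α → EReal} {ψ : α → ℝ} {z : α} :
    TouchesFromAbove s u ψ z ↔
      ∃ R > 0, uscEnv s u z = (ψ z : EReal) ∧ ∀ w ∈ ball z R ∩ s, uscEnv s u w ≤ (ψ w : EReal) := by
  rw [TouchesFromAbove, nhdsWithin_basis_ball.eventually_iff]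
  exact ⟨fun ⟨heq, R, hR, hle⟩ => ⟨R, hR, heq, hle⟩, fun ⟨R, hR, heq, hle⟩ => ⟨heq, R, hR, hle⟩⟩

lemma LocLipOn.mono {α : Type*} [PseudoMetricSpace α] {s t : Set α} {f : α → ℝ}
    (h : LocLipOn t f) (hst : s ⊆ t) : LocLipOn s f := fun z hz =>
  let ⟨K, v, hv, hK⟩ := h z (hst hz)
  ⟨K, v, nhdsWithin_mono z hst hv, hK⟩

section Parabolic

variable {P Q : Set (ℝ × X)}

lemma IsCQ.mono {ψ : ℝ × X → ℝ} (h : IsCQ Q ψ) (hPQ : P ⊆ Q) : IsCQ P ψ :=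
  ⟨h.1.mono hPQ, fun z hz => h.2.1 z (hPQ hz), h.2.2.mono hPQ⟩

lemma IsC1UnderQ.mono {ψ : ℝ × X → ℝ} (h : IsC1UnderQ Q ψ) (hPQ : P ⊆ Q) : IsC1UnderQ P ψ :=
  ⟨h.1.mono hPQ, h.2.1.mono hPQ, h.2.2.mono hPQ⟩

variable {F : (ℝ × X) → ℝ → ℝ → ℝ} {u : ℝ × X → EReal}

lemma isSubsol_iff_forall_isSubsolAt : IsSubsol Q F u ↔ ∀ z ∈ Q, IsSubsolAt Q F u z := by
  simp only [IsSubsol, IsSubsolAt, touchesFromAbove_iff_exists_ball]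
  exact ⟨fun h z hz ψ₁ ψ₂ hψ₁ hψ₂ => h ψ₁ ψ₂ hψ₁ hψ₂ z hz,
    fun h ψ₁ ψ₂ hψ₁ hψ₂ z hz => h z hz ψ₁ ψ₂ hψ₁ hψ₂⟩

-- Test functions on `Q` restrict to test functions on `P`, while the envelopes near `z` only see
-- the germ of the underlying set, which is the same for `P` and `Q`.
lemma IsSubsolAt.of_subset {z : ℝ × X} (h : IsSubsolAt P F u z) (hPQ : P ⊆ Q)
    (hP : P ∈ 𝓝[Q] z) : IsSubsolAt Q F u z := by
  intro ψ₁ ψ₂ hψ₁ hψ₂ htouch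
  have hQP : Q =ᶠ[𝓝 z] P := by
    simpa only [inter_eq_right.2 hPQ] using mem_nhdsWithin_iff_eventuallyEq.1 hP
  rw [uscEnvR_congr_set hQP]
  exact h ψ₁ ψ₂ (hψ₁.mono hPQ) (hψ₂.mono hPQ) (htouch.congr_set hQP)

theorem stmt3_general (h : ∀ z ∈ Q, ∃ P ⊆ Q, P ∈ 𝓝[Q] z ∧ IsSubsol P F u) :
    IsSubsol Q F u := by
  refine isSubsol_iff_forall_isSubsolAt.2 fun z hz => ?_
  obtain ⟨P, hPQ, hP, hsub⟩ := h z hz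
  have hzP : z ∈ P := mem_of_mem_nhdsWithin hz hP
  exact (isSubsol_iff_forall_isSubsolAt.1 hsub z hzP).of_subset hPQ hP

end Parabolic

/-- locality. -/
theorem stmt3 [CompleteSpace X] (hgeo : IsGeodesicSpace X)
    (Q₁ Q₂ : Set (ℝ × X)) (hQ₁ : IsOpen Q₁) (hQ₂ : IsOpen Q₂)
    (hQ₁s : Q₁ ⊆ Set.Ioi (0:ℝ) ×ˢ (Set.univ : Set X))
    (hQ₂s : Q₂ ⊆ Set.Ioi (0:ℝ) ×ˢ (Set.univ : Set X))
    (F : (ℝ × X) → ℝ → ℝ → ℝ)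
    (hFc : ContinuousOn (fun w : (ℝ × X) × ℝ × ℝ => F w.1 w.2.1 w.2.2)
      ((Q₁ ∪ Q₂) ×ˢ ((Set.univ : Set ℝ) ×ˢ (Set.univ : Set ℝ))))
    (hFe : ∀ z p q, F z (-p) q = F z p q)
    (hFconv : ∀ z q, ConvexOn ℝ Set.univ fun p => F z p q)
    (u : ℝ × X → EReal)
    (h1 : IsSubsol Q₁ F u) (h2 : IsSubsol Q₂ F u) :
    IsSubsol (Q₁ ∪ Q₂) F u :=
  stmt3_general fun _z hz => hz.elim
    (fun hz => ⟨Q₁, subset_union_left, mem_nhdsWithin_of_mem_nhds (hQ₁.mem_nhds hz), h1⟩)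
    (fun hz => ⟨Q₂, subset_union_right, mem_nhdsWithin_of_mem_nhds (hQ₂.mem_nhds hz), h2⟩)
end
end

section
/- (Change of variable.) Let I, J ⊆ ℝ be open intervals, U ⊆ X open, and φ:I→J a C¹ diffeomorphism with φ' > 0. Let F=F(x,p,q) be continuous on U×ℝ×ℝ, even and convex in p. If u is a metric viscosity subsolution of F(x,|Du|,∂ₜu)=0 in I×U, then v(s,x) := u(φ⁻¹(s),x) is a metric viscosity subsolution of F(x,|Dv|, φ'(φ⁻¹(s))·∂ₛv)=0 in J×U. -/
open Filter Metric Set Topology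

noncomputable section

variable {X : Type*} [MetricSpace X]

/-!
Write `g (t, x) = (φ t, x)`. Since `g` leaves the space variable alone, spatial slopes commute with
composition by `g`, while time derivatives pick up the factor `φ'`; so `g` pulls test functions on
`J × U` back to test functions on `I × U`. An injective continuous function of one real variable is
a local homeomorphism, so `g` also transports envelopes and local maxima, and the subsolution
inequality for `u` at `z` becomes the one for `u ∘ g⁻¹` at `g z`.
-/

theorem nhds_le_map_nhds_of_injOn {α β : Type*}
    [ConditionallyCompleteLinearOrder α] [TopologicalSpace α] [OrderTopology α]
    [DenselyOrdered α] [NoMinOrder α] [NoMaxOrder α]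
    [LinearOrder β] [TopologicalSpace β] [OrderTopology β]
    {f : α → β} {s : Set α} {a : α} (hs : s ∈ 𝓝 a) (hf : ContinuousOn f s) (hinj : InjOn f s) :
    𝓝 (f a) ≤ map f (𝓝 a) := by
  intro t ht
  obtain ⟨⟨l, r⟩, ⟨hla, har⟩, hlr⟩ := (nhds_basis_Ioo a).mem_iff.1 (inter_mem hs (mem_map.1 ht))
  obtain ⟨b, hlb, hba⟩ := exists_between hla
  obtain ⟨c, hac, hcr⟩ := exists_between har
  have hbc : Icc b c ⊆ s ∩ f ⁻¹' t := (Icc_subset_Ioo hlb hcr).trans hlr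
  have hcont : ContinuousOn f (Icc b c) := hf.mono fun x hx => (hbc hx).1
  have hb : b ∈ Icc b c := left_mem_Icc.2 (hba.trans hac).le
  have ha : a ∈ Icc b c := ⟨hba.le, hac.le⟩
  have hc : c ∈ Icc b c := right_mem_Icc.2 (hba.trans hac).le
  have himage : f '' Icc b c ⊆ t := image_subset_iff.2 fun x hx => (hbc hx).2
  rcases hcont.strictMonoOn_of_injOn_Icc' (hba.trans hac).le
    (hinj.mono fun x hx => (hbc hx).1) with hmono | hanti
  · exact mem_of_superset (Icc_mem_nhds (hmono hb ha hba) (hmono ha hc hac))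
      ((intermediate_value_Icc (hba.trans hac).le hcont).trans himage)
  · exact mem_of_superset (Icc_mem_nhds (hanti ha hc hac) (hanti hb ha hba))
      ((intermediate_value_Icc' (hba.trans hac).le hcont).trans himage)

theorem map_nhdsWithin_eq_of_injOn {α β : Type*}
    [ConditionallyCompleteLinearOrder α] [TopologicalSpace α] [OrderTopology α]
    [DenselyOrdered α] [NoMinOrder α] [NoMaxOrder α]
    [LinearOrder β] [TopologicalSpace β] [OrderTopology β]
    {f : α → β} {s : Set α} {t : Set β} {a : α} (hs : s ∈ 𝓝 a) (hf : ContinuousOn f s)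
    (hinj : InjOn f s) (hst : MapsTo f s t) :
    map f (𝓝[s] a) = 𝓝[t] (f a) := by
  have hmap : map f (𝓝 a) = 𝓝 (f a) :=
    le_antisymm (hf.continuousAt hs) (nhds_le_map_nhds_of_injOn hs hf hinj)
  have ht : t ∈ 𝓝 (f a) := hmap ▸ mem_map.2 (mem_of_superset hs hst)
  rw [nhdsWithin_eq_nhds.2 hs, nhdsWithin_eq_nhds.2 ht, hmap]

theorem map_prodMap_id_nhdsWithin {α β γ : Type*} [TopologicalSpace α] [TopologicalSpace β]
    [TopologicalSpace γ] {f : α → β} {s : Set α} {t : Set β} {U : Set γ} {z : α × γ}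
    (hf : map f (𝓝[s] z.1) = 𝓝[t] (f z.1)) :
    map (Prod.map f id) (𝓝[s ×ˢ U] z) = 𝓝[t ×ˢ U] (Prod.map f id z) := by
  rw [nhdsWithin_prod_eq, ← prod_map_map_eq', hf, map_id, Prod.map, nhdsWithin_prod_eq, id]

theorem locallyLipschitzOn_of_hasDerivAt {𝕜 E : Type*} [RCLike 𝕜] [NormedAddCommGroup E]
    [NormedSpace 𝕜 E] {f f' : 𝕜 → E} {s : Set 𝕜} (hs : IsOpen s)
    (hf : ∀ t ∈ s, HasDerivAt f (f' t) t) (hf' : ContinuousOn f' s) : LocallyLipschitzOn s f := by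
  intro t ht
  have hstrict : HasStrictDerivAt f (f' t) t :=
    hasStrictDerivAt_of_hasDerivAt_of_continuousAt
      (eventually_of_mem (hs.mem_nhds ht) hf) (hf'.continuousAt (hs.mem_nhds ht))
  obtain ⟨K, v, hv, hK⟩ := hstrict.hasStrictFDerivAt.exists_lipschitzOnWith
  exact ⟨K, v, mem_nhdsWithin_of_mem_nhds hv, hK⟩

theorem locallyLipschitzOn_prodMap {α β γ δ : Type*} [PseudoEMetricSpace α]
    [PseudoEMetricSpace β] [PseudoEMetricSpace γ] [PseudoEMetricSpace δ]
    {f : α → β} {g : γ → δ} {s : Set α} {t : Set γ}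
    (hf : LocallyLipschitzOn s f) (hg : LocallyLipschitzOn t g) :
    LocallyLipschitzOn (s ×ˢ t) (Prod.map f g) := by
  intro z hz
  obtain ⟨K, v, hv, hK⟩ := hf hz.1
  obtain ⟨L, w, hw, hL⟩ := hg hz.2
  refine ⟨max (K * 1) (L * 1), v ×ˢ w, ?_, ?_⟩
  · exact nhdsWithin_prod hv hw
  · exact (hK.comp LipschitzWith.prod_fst.lipschitzOnWith fun _ hx => hx.1).prodMk
      (hL.comp LipschitzWith.prod_snd.lipschitzOnWith fun _ hx => hx.2)

theorem LocLipOn.comp {α β : Type*} [PseudoMetricSpace α] [PseudoMetricSpace β] {f : β → ℝ}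
    {g : α → β} {s : Set α} {t : Set β} (hf : LocLipOn t f) (hg : LocallyLipschitzOn s g)
    (hst : MapsTo g s t) : LocLipOn s (f ∘ g) := by
  intro z hz
  obtain ⟨K, v, hv, hK⟩ := hf _ (hst hz)
  obtain ⟨L, w, hw, hL⟩ := hg hz
  have hgv : g ⁻¹' v ∈ 𝓝[s] z := (hg.continuousOn z hz).tendsto_nhdsWithin hst hv
  exact ⟨K * L, w ∩ g ⁻¹' v, inter_mem hw hgv,
    hK.comp (hL.mono inter_subset_left) fun _ hx => hx.2⟩

section Envelope

variable {α β : Type*} [TopologicalSpace α] [TopologicalSpace β] {s : Set α} {t : Set β}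

theorem uscEnv_congr {u v : α → EReal} (h : EqOn u v s) (z : α) : uscEnv s u z = uscEnv s v z :=
  limsup_congr (eventually_of_mem self_mem_nhdsWithin h)

theorem uscEnv_comp {g : α → β} {z : α} (hg : map g (𝓝[s] z) = 𝓝[t] (g z)) (u : β → EReal) :
    uscEnv s (u ∘ g) z = uscEnv t u (g z) := by
  rw [uscEnv, limsup_comp, hg, uscEnv]

theorem uscEnvR_comp {g : α → β} {z : α} (hg : map g (𝓝[s] z) = 𝓝[t] (g z)) (f : β → ℝ) :
    uscEnvR s (f ∘ g) z = uscEnvR t f (g z) := by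
  rw [uscEnvR, limsup_comp, hg, uscEnvR]

/-- The test function `ψ` touches `u` from above at `z` relative to `s`: the difference `u* - ψ`
has a zero local maximum at `z`. It is stated as an inequality because `u*` may be infinite. -/
def TouchesAbove (s : Set α) (u : α → EReal) (ψ : α → ℝ) (z : α) : Prop :=
  uscEnv s u z = ψ z ∧ ∀ᶠ w in 𝓝[s] z, uscEnv s u w ≤ ψ w

theorem touchesAbove_iff_exists_ball {α : Type*} [PseudoMetricSpace α] {s : Set α}
    {u : α → EReal} {ψ : α → ℝ} {z : α} :
    TouchesAbove s u ψ z ↔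
      ∃ R > 0, uscEnv s u z = ψ z ∧ ∀ w ∈ ball z R ∩ s, uscEnv s u w ≤ ψ w := by
  rw [TouchesAbove, nhdsWithin_basis_ball.eventually_iff]
  tauto

theorem touchesAbove_congr {u v : α → EReal} (h : EqOn u v s) {ψ : α → ℝ} {z : α} :
    TouchesAbove s u ψ z ↔ TouchesAbove s v ψ z := by
  simp only [TouchesAbove, uscEnv_congr h]

theorem touchesAbove_comp {g : α → β} (hg : ∀ w ∈ s, map g (𝓝[s] w) = 𝓝[t] (g w))
    {u : β → EReal} {ψ : β → ℝ} {z : α} (hz : z ∈ s) :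
    TouchesAbove s (u ∘ g) (ψ ∘ g) z ↔ TouchesAbove t u ψ (g z) := by
  have hle : ∀ᶠ w in 𝓝[s] z,
      uscEnv s (u ∘ g) w ≤ (ψ ∘ g) w ↔ uscEnv t u (g w) ≤ ψ (g w) :=
    eventually_of_mem self_mem_nhdsWithin fun w hw => by
      rw [uscEnv_comp (hg w hw), Function.comp_apply]
  rw [TouchesAbove, TouchesAbove, uscEnv_comp (hg z hz), eventually_congr hle, ← hg z hz,
    eventually_map, Function.comp_apply]

end Envelope

theorem slopeT_comp_prodMap_id (φ : ℝ → ℝ) (ψ : ℝ × X → ℝ) :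
    slopeT (ψ ∘ Prod.map φ id) = slopeT ψ ∘ Prod.map φ id := rfl

theorem slopeDownT_comp_prodMap_id (φ : ℝ → ℝ) (ψ : ℝ × X → ℝ) :
    slopeDownT (ψ ∘ Prod.map φ id) = slopeDownT ψ ∘ Prod.map φ id := rfl

theorem hasDerivAt_comp_prodMap_id {Y : Type*} {φ : ℝ → ℝ} {a : ℝ} {ψ : ℝ × Y → ℝ} {z : ℝ × Y}
    (hψ : DifferentiableAt ℝ (fun s => ψ (s, z.2)) (φ z.1)) (hφ : HasDerivAt φ a z.1) :
    HasDerivAt (fun s => (ψ ∘ Prod.map φ id) (s, z.2))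
      (a * deriv (fun s => ψ (s, z.2)) (φ z.1)) z.1 := by
  rw [mul_comm]
  exact hψ.hasDerivAt.comp z.1 hφ

theorem Fr_comp {Y Z : Type*} (F : ℝ × Z → ℝ → ℝ → ℝ) (g : ℝ × Y → ℝ × Z) (a : ℝ × Y → ℝ)
    (r : ℝ) (z : ℝ × Y) (p q : ℝ) :
    Fr (fun z p q => F (g z) p (a z * q)) r z p q = Fr F r (g z) p (a z * q) := rfl

section TimeChange

variable {I J : Set ℝ} {U : Set X} {φ φ' : ℝ → ℝ}

theorem IsCQ.comp_prodMap_id {ψ : ℝ × X → ℝ} (hψ : IsCQ (J ×ˢ U) ψ) (hI : IsOpen I)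
    (hmaps : MapsTo φ I J) (hφ : ∀ t ∈ I, HasDerivAt φ (φ' t) t) (hφ' : ContinuousOn φ' I) :
    IsCQ (I ×ˢ U) (ψ ∘ Prod.map φ id) := by
  obtain ⟨hlip, hdiff, hcont⟩ := hψ
  have hmaps' : MapsTo (Prod.map φ id) (I ×ˢ U) (J ×ˢ U) := hmaps.prodMap (mapsTo_id U)
  have hlip' : LocallyLipschitzOn (I ×ˢ U) (Prod.map φ id) :=
    locallyLipschitzOn_prodMap (locallyLipschitzOn_of_hasDerivAt hI hφ hφ')
      LocallyLipschitz.id.locallyLipschitzOn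
  have hderiv (z : ℝ × X) (hz : z ∈ I ×ˢ U) :=
    hasDerivAt_comp_prodMap_id (hdiff _ (hmaps' hz)) (hφ z.1 hz.1)
  refine ⟨hlip.comp hlip' hmaps', fun z hz => (hderiv z hz).differentiableAt, ?_⟩
  have hprod : ContinuousOn (fun z => φ' z.1 * timeDeriv ψ (Prod.map φ id z)) (I ×ˢ U) :=
    (hφ'.comp continuousOn_fst fun _ hz => hz.1).mul (hcont.comp hlip'.continuousOn hmaps')
  exact hprod.congr fun z hz => (hderiv z hz).deriv

theorem IsC1UnderQ.comp_prodMap_id {ψ : ℝ × X → ℝ} (hψ : IsC1UnderQ (J ×ˢ U) ψ) (hI : IsOpen I)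
    (hmaps : MapsTo φ I J) (hφ : ∀ t ∈ I, HasDerivAt φ (φ' t) t) (hφ' : ContinuousOn φ' I) :
    IsC1UnderQ (I ×ˢ U) (ψ ∘ Prod.map φ id) := by
  obtain ⟨hCQ, hslope, hcont⟩ := hψ
  have hmaps' : MapsTo (Prod.map φ id) (I ×ˢ U) (J ×ˢ U) := hmaps.prodMap (mapsTo_id U)
  have hφc : ContinuousOn φ I := HasDerivAt.continuousOn hφ
  refine ⟨hCQ.comp_prodMap_id hI hmaps hφ hφ', ?_, ?_⟩
  · rw [slopeDownT_comp_prodMap_id, slopeT_comp_prodMap_id]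
    exact fun z hz => hslope (hmaps' hz)
  · rw [slopeT_comp_prodMap_id]
    exact hcont.comp (hφc.prodMap continuousOn_id) hmaps'

theorem stmt4_general {φinv : ℝ → ℝ} (hI : IsOpen I) (hmaps : MapsTo φ I J)
    (hinvmaps : MapsTo φinv J I) (hinv : InvOn φinv φ I J)
    (hφ : ∀ t ∈ I, HasDerivAt φ (φ' t) t) (hφ' : ContinuousOn φ' I)
    {F : ℝ × X → ℝ → ℝ → ℝ} {u : ℝ × X → EReal} (hu : IsSubsol (I ×ˢ U) F u) :
    IsSubsol (J ×ˢ U) (fun z p q => F (φinv z.1, z.2) p (φ' (φinv z.1) * q))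
      (fun z => u (φinv z.1, z.2)) := by
  intro ψ₁ ψ₂ hψ₁ hψ₂ z' hz' hmax
  obtain ⟨z, hz, rfl⟩ : ∃ z ∈ I ×ˢ U, Prod.map φ id z = z' :=
    ⟨(φinv z'.1, z'.2), ⟨hinvmaps hz'.1, hz'.2⟩, Prod.ext (hinv.2 hz'.1) rfl⟩
  have hnhds : ∀ w ∈ I ×ˢ U,
      map (Prod.map φ id) (𝓝[I ×ˢ U] w) = 𝓝[J ×ˢ U] (Prod.map φ id w) := fun w hw =>
    map_prodMap_id_nhdsWithin <| map_nhdsWithin_eq_of_injOn (hI.mem_nhds hw.1)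
      (HasDerivAt.continuousOn hφ) hinv.1.injOn hmaps
  have hcomp : EqOn ((fun w => u (φinv w.1, w.2)) ∘ Prod.map φ id) u (I ×ˢ U) := fun w hw =>
    congrArg u (Prod.ext (hinv.1 hw.1) rfl)
  have htouch : TouchesAbove (I ×ˢ U) u ((fun w => ψ₁ w + ψ₂ w) ∘ Prod.map φ id) z :=
    (touchesAbove_congr hcomp).1 <|
      (touchesAbove_comp hnhds hz).2 (touchesAbove_iff_exists_ball.2 hmax)
  have hineq := hu _ _ (hψ₁.comp_prodMap_id hI hmaps hφ hφ') (hψ₂.comp_prodMap_id hI hmaps hφ hφ')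
    z hz (touchesAbove_iff_exists_ball.1 htouch)
  have htime : timeDeriv ((fun w => ψ₁ w + ψ₂ w) ∘ Prod.map φ id) z =
      φ' z.1 * timeDeriv (fun w => ψ₁ w + ψ₂ w) (Prod.map φ id z) :=
    (hasDerivAt_comp_prodMap_id ((hψ₁.1.2.1 _ hz').add (hψ₂.2.1 _ hz')) (hφ z.1 hz.1)).deriv
  rw [slopeT_comp_prodMap_id, slopeT_comp_prodMap_id, uscEnvR_comp (hnhds z hz)] at hineq
  have hinvz : φinv (Prod.map φ id z).1 = z.1 := hinv.1 hz.1
  rwa [Fr_comp F (fun w => (φinv w.1, w.2)) fun w => φ' (φinv w.1), hinvz, ← htime]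

end TimeChange

/-- change of variable in time. -/
theorem stmt4 [CompleteSpace X] (hgeo : IsGeodesicSpace X)
    (I J : Set ℝ) (hI : IsOpen I) (hIc : I.OrdConnected)
    (hJ : IsOpen J) (hJc : J.OrdConnected)
    (U : Set X) (hU : IsOpen U)
    (φ φ' φinv : ℝ → ℝ)
    (hmaps : Set.MapsTo φ I J) (hinvmaps : Set.MapsTo φinv J I)
    (hderiv : ∀ t ∈ I, HasDerivAt φ (φ' t) t)
    (hderivcont : ContinuousOn φ' I)
    (hpos : ∀ t ∈ I, 0 < φ' t)
    (hinv₁ : ∀ t ∈ I, φinv (φ t) = t)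
    (hinv₂ : ∀ s ∈ J, φ (φinv s) = s)
    (F : X → ℝ → ℝ → ℝ)
    (hFc : ContinuousOn (fun w : X × ℝ × ℝ => F w.1 w.2.1 w.2.2)
      (U ×ˢ ((Set.univ : Set ℝ) ×ˢ (Set.univ : Set ℝ))))
    (hFe : ∀ x p q, F x (-p) q = F x p q)
    (hFconv : ∀ x q, ConvexOn ℝ Set.univ fun p => F x p q)
    (u : ℝ × X → EReal)
    (hu : IsSubsol (I ×ˢ U) (fun z p q => F z.2 p q) u) :
    IsSubsol (J ×ˢ U) (fun z p q => F z.2 p (φ' (φinv z.1) * q))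
      (fun z => u (φinv z.1, z.2)) :=
  stmt4_general hI hmaps hinvmaps ⟨hinv₁, hinv₂⟩ hderiv hderivcont hu
end
end

section
/- (Strong solutions are viscosity subsolutions.) Let F=F(z,p,q) be continuous on Q×ℝ×ℝ, even and convex in p. Let ψ₁ ∈ C̄¹(Q) and ψ₂ ∈ 𝒞(Q), and suppose ψ = ψ₁+ψ₂ satisfies F_{|∇ψ₂|*(z)}(z, |∇ψ₁|(z), ∂ₜψ(z)) ≤ 0 for all z ∈ Q. Then ψ is a metric viscosity subsolution of F(z,|Du|,∂ₜu)=0 in Q. -/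
open Filter Metric Set Topology

noncomputable section

variable {X : Type*} [MetricSpace X]

/-! If `ψ₁ + ψ₂ - (φ₁ + φ₂)` has a local maximum at `z`, then near `z` the increments of `ψ₁` are at
most those of `φ₁ + φ₂ - ψ₂`, so `|∇⁺ψ₁| ≤ |∇φ₁| + |∇φ₂| + |∇ψ₂|` at `z`; likewise
`|∇⁻φ₁| ≤ |∇ψ₁| + |∇ψ₂| + |∇φ₂|`. Since `ψ₁` is of class `C̄¹` and `φ₁` of class `C̲¹`, the left
sides are full slopes, and `|∇ψ₁|` and `|∇φ₁|` differ by at most `|∇ψ₂| + |∇φ₂|`. Hence the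
interval of radius `r = |∇ψ₂|*` around `|∇ψ₁|`, over which `F_r` takes a supremum, meets the
interval of radius `s = |∇φ₂|*` around `|∇φ₁|`, over which `F_{-s}` takes an infimum, so the infimum
is at most the supremum. The time derivatives agree because a maximum in time is critical. -/

section Limsup

variable {α : Type*} {l : Filter α} {f : α → ℝ}

-- On the trivial filter, as at an isolated point, the real `limsup` is `sInf univ = 0`.
lemma limsup_nonneg_of_nonneg (hf : ∀ y, 0 ≤ f y) : 0 ≤ limsup f l := by
  rcases l.eq_or_neBot with rfl | hl
  · simp [limsup_eq]
  · rw [limsup_eq]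
    refine Real.sInf_nonneg fun c hc => ?_
    obtain ⟨y, hy⟩ := hc.exists
    exact (hf y).trans hy

lemma limsup_le_of_nonneg {c : ℝ} (hf : ∀ y, 0 ≤ f y) (hc : 0 ≤ c) (h : ∀ᶠ y in l, f y ≤ c) :
    limsup f l ≤ c := by
  rcases l.eq_or_neBot with rfl | hl
  · simpa [limsup_eq] using hc
  · exact limsup_le_of_le (isBoundedUnder_of ⟨0, hf⟩).isCoboundedUnder_le h

end Limsup

section PointwiseLipschitz

variable {α : Type*} [PseudoMetricSpace α] {f g : α → ℝ} {x : α}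

/-- Pointwise Lipschitz continuity at `x`, that is, boundedness of the difference quotients of `f`
near `x`. It ensures that the slopes of `f` at `x`, which are real `limsup`s, are not junk. -/
def PointwiseLipschitzAt (f : α → ℝ) (x : α) : Prop :=
  (fun y => f y - f x) =O[𝓝 x] fun y => dist y x

namespace PointwiseLipschitzAt

lemma neg (hf : PointwiseLipschitzAt f x) : PointwiseLipschitzAt (-f) x :=
  (Asymptotics.IsBigO.neg_left hf).congr_left fun y => by simp only [Pi.neg_apply]; ring

lemma add (hf : PointwiseLipschitzAt f x) (hg : PointwiseLipschitzAt g x) :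
    PointwiseLipschitzAt (f + g) x :=
  (Asymptotics.IsBigO.add hf hg).congr_left fun y => by simp only [Pi.add_apply]; ring

lemma sub (hf : PointwiseLipschitzAt f x) (hg : PointwiseLipschitzAt g x) :
    PointwiseLipschitzAt (f - g) x :=
  sub_eq_add_neg f g ▸ hf.add hg.neg

end PointwiseLipschitzAt

end PointwiseLipschitz

section Slope

variable {f g : X → ℝ} {x : X} {K ε : ℝ}

lemma mslope_nonneg (f : X → ℝ) (x : X) : 0 ≤ mslope f x :=
  limsup_nonneg_of_nonneg fun _ => by positivity

lemma mslope_le_of_eventually (hK : 0 ≤ K) (h : ∀ᶠ y in 𝓝[≠] x, |f y - f x| ≤ K * dist y x) :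
    mslope f x ≤ K :=
  limsup_le_of_nonneg (fun _ => by positivity) hK <|
    h.mono fun _ hy => div_le_of_le_mul₀ dist_nonneg hK hy

lemma mslopeUp_le_of_eventually (hK : 0 ≤ K) (h : ∀ᶠ y in 𝓝[≠] x, f y - f x ≤ K * dist y x) :
    mslopeUp f x ≤ K :=
  limsup_le_of_nonneg (fun _ => by positivity) hK <|
    h.mono fun _ hy => div_le_of_le_mul₀ dist_nonneg hK (max_le hy (by positivity))

lemma PointwiseLipschitzAt.eventually_abs_sub_le (hf : PointwiseLipschitzAt f x) (hε : 0 < ε) :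
    ∀ᶠ y in 𝓝[≠] x, |f y - f x| ≤ (mslope f x + ε) * dist y x := by
  have hdist : ∀ᶠ y in 𝓝[≠] x, dist y x ≠ 0 :=
    eventually_mem_nhdsWithin.mono fun _ hy => dist_ne_zero.2 hy
  have hbdd : IsBoundedUnder (· ≤ ·) (𝓝[≠] x) fun y => |f y - f x| / dist y x := by
    simpa only [Real.norm_eq_abs, abs_dist] using
      (Asymptotics.isBigO_iff_isBoundedUnder_le_div hdist).1 (hf.mono nhdsWithin_le_nhds)
  filter_upwards [eventually_lt_of_limsup_lt (lt_add_of_pos_right (mslope f x) hε) hbdd,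
    eventually_mem_nhdsWithin] with y hy hne
  exact ((div_lt_iff₀ (dist_pos.2 hne)).1 hy).le

lemma mslope_neg (f : X → ℝ) (x : X) : mslope (-f) x = mslope f x := by
  simp only [mslope, Pi.neg_apply, neg_sub_neg, abs_sub_comm]

lemma mslopeUp_neg (f : X → ℝ) (x : X) : mslopeUp (-f) x = mslopeDown f x := by
  simp only [mslopeUp, mslopeDown, Pi.neg_apply, neg_sub_neg]

lemma mslope_add_le (hf : PointwiseLipschitzAt f x) (hg : PointwiseLipschitzAt g x) :
    mslope (f + g) x ≤ mslope f x + mslope g x := by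
  refine le_of_forall_pos_le_add fun ε hε => mslope_le_of_eventually
    (add_nonneg (add_nonneg (mslope_nonneg f x) (mslope_nonneg g x)) hε.le) ?_
  filter_upwards [hf.eventually_abs_sub_le (half_pos hε),
    hg.eventually_abs_sub_le (half_pos hε)] with y hfy hgy
  calc |(f + g) y - (f + g) x| = |(f y - f x) + (g y - g x)| := by
        simp only [Pi.add_apply, add_sub_add_comm]
    _ ≤ |f y - f x| + |g y - g x| := abs_add_le _ _
    _ ≤ (mslope f x + ε / 2) * dist y x + (mslope g x + ε / 2) * dist y x := add_le_add hfy hgy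
    _ = (mslope f x + mslope g x + ε) * dist y x := by ring

lemma mslope_sub_le (hf : PointwiseLipschitzAt f x) (hg : PointwiseLipschitzAt g x) :
    mslope (f - g) x ≤ mslope f x + mslope g x := by
  simpa only [sub_eq_add_neg, mslope_neg] using mslope_add_le hf hg.neg

lemma mslopeUp_le_mslope_of_isLocalMax_sub (hg : PointwiseLipschitzAt g x)
    (h : IsLocalMax (f - g) x) : mslopeUp f x ≤ mslope g x := by
  refine le_of_forall_pos_le_add fun ε hε => mslopeUp_le_of_eventually
    (add_nonneg (mslope_nonneg g x) hε.le) ?_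
  filter_upwards [hg.eventually_abs_sub_le hε, h.filter_mono nhdsWithin_le_nhds] with y hgy hy
  calc f y - f x ≤ g y - g x := by simp only [Pi.sub_apply] at hy; linarith
    _ ≤ |g y - g x| := le_abs_self _
    _ ≤ (mslope g x + ε) * dist y x := hgy

lemma mslopeDown_le_mslope_of_isLocalMax_sub (hf : PointwiseLipschitzAt f x)
    (h : IsLocalMax (f - g) x) : mslopeDown g x ≤ mslope f x := by
  rw [← mslopeUp_neg, ← mslope_neg f]
  exact mslopeUp_le_mslope_of_isLocalMax_sub hf.neg (by rwa [neg_sub_neg])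

theorem abs_mslope_sub_mslope_le_of_isLocalMax_sub {f₁ f₂ g₁ g₂ : X → ℝ}
    (hf₁ : PointwiseLipschitzAt f₁ x) (hf₂ : PointwiseLipschitzAt f₂ x)
    (hg₁ : PointwiseLipschitzAt g₁ x) (hg₂ : PointwiseLipschitzAt g₂ x)
    (hup : mslopeUp f₁ x = mslope f₁ x) (hdown : mslopeDown g₁ x = mslope g₁ x)
    (hmax : IsLocalMax (f₁ + f₂ - (g₁ + g₂)) x) :
    |mslope f₁ x - mslope g₁ x| ≤ mslope f₂ x + mslope g₂ x := by
  have hf : mslope f₁ x ≤ mslope g₁ x + mslope g₂ x + mslope f₂ x := calc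
    mslope f₁ x = mslopeUp f₁ x := hup.symm
    _ ≤ mslope (g₁ + g₂ - f₂) x :=
      mslopeUp_le_mslope_of_isLocalMax_sub ((hg₁.add hg₂).sub hf₂) (by convert hmax using 1; abel)
    _ ≤ mslope (g₁ + g₂) x + mslope f₂ x := mslope_sub_le (hg₁.add hg₂) hf₂
    _ ≤ mslope g₁ x + mslope g₂ x + mslope f₂ x := by gcongr; exact mslope_add_le hg₁ hg₂
  have hg : mslope g₁ x ≤ mslope f₁ x + mslope f₂ x + mslope g₂ x := calc
    mslope g₁ x = mslopeDown g₁ x := hdown.symm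
    _ ≤ mslope (f₁ + f₂ - g₂) x :=
      mslopeDown_le_mslope_of_isLocalMax_sub ((hf₁.add hf₂).sub hg₂) (by convert hmax using 1; abel)
    _ ≤ mslope (f₁ + f₂) x + mslope g₂ x := mslope_sub_le (hf₁.add hf₂) hg₂
    _ ≤ mslope f₁ x + mslope f₂ x + mslope g₂ x := by gcongr; exact mslope_add_le hf₁ hf₂
  exact abs_sub_le_iff.2 ⟨by linarith, by linarith⟩

end Slope

section Envelope

variable {α : Type*}

lemma uscEnv_coe_eq [TopologicalSpace α] {s : Set α} {f : α → ℝ} {z : α} (hz : z ∈ s)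
    (hf : ContinuousWithinAt f s z) : uscEnv s (fun w => (f w : EReal)) z = f z :=
  haveI : (𝓝[s] z).NeBot := nhdsWithin_neBot_of_mem hz
  ((continuous_coe_real_ereal.tendsto _).comp hf).limsup_eq

lemma le_uscEnvR [TopologicalSpace α] {s : Set α} {f : α → ℝ} {z : α} (hz : z ∈ s)
    (hf : IsBoundedUnder (· ≤ ·) (𝓝[s] z) f) : f z ≤ uscEnvR s f z :=
  le_limsup_of_frequently_le (fun hlt => hlt.self_of_nhdsWithin hz le_rfl) hf

lemma isLocalMax_sub_of_uscEnv_le [PseudoMetricSpace α] {s : Set α} {u φ : α → ℝ} {z : α} {R : ℝ}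
    (hs : s ∈ 𝓝 z) (hu : ContinuousOn u s) (hR : 0 < R)
    (heq : uscEnv s (fun w => (u w : EReal)) z = φ z)
    (hle : ∀ w ∈ ball z R ∩ s, uscEnv s (fun w => (u w : EReal)) w ≤ φ w) :
    IsLocalMax (u - φ) z := by
  have hz : z ∈ s := mem_of_mem_nhds hs
  rw [uscEnv_coe_eq hz (hu z hz), EReal.coe_eq_coe_iff] at heq
  filter_upwards [ball_mem_nhds z hR, hs] with w hwR hws
  have hw := hle w ⟨hwR, hws⟩
  rw [uscEnv_coe_eq hws (hu w hws), EReal.coe_le_coe_iff] at hw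
  simpa only [Pi.sub_apply, heq, sub_self, sub_nonpos] using hw

end Envelope

section LocLip

lemma LocLipOn.continuousOn {α : Type*} [PseudoMetricSpace α] {s : Set α} {f : α → ℝ}
    (hf : LocLipOn s f) : ContinuousOn f s :=
  LocallyLipschitzOn.continuousOn hf

section Slice

variable {S Y : Type*} [PseudoMetricSpace S] [PseudoMetricSpace Y] {Q : Set (S × Y)}
  {u : S × Y → ℝ} {z : S × Y}

lemma eventually_abs_slice_sub_le_of_lipschitzOnWith {K : NNReal} {t : Set (S × Y)}
    (hu : LipschitzOnWith K u t) (ht : t ∈ 𝓝 z) :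
    ∀ᶠ y in 𝓝 z.2, |u (z.1, y) - u (z.1, z.2)| ≤ K * dist y z.2 := by
  filter_upwards [(Continuous.prodMk_right z.1).continuousAt.preimage_mem_nhds ht] with y hy
  simpa only [Real.dist_eq, Prod.dist_eq, dist_self, dist_nonneg, sup_of_le_right] using
    hu.dist_le_mul _ hy _ (mem_of_mem_nhds ht)

lemma LocLipOn.pointwiseLipschitzAt_slice (hu : LocLipOn Q u) (hQ : IsOpen Q) (hz : z ∈ Q) :
    PointwiseLipschitzAt (fun y => u (z.1, y)) z.2 := by
  obtain ⟨K, t, ht, hK⟩ := hu z hz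
  rw [hQ.nhdsWithin_eq hz] at ht
  refine .of_bound K ?_
  filter_upwards [eventually_abs_slice_sub_le_of_lipschitzOnWith hK ht] with y hy
  rwa [Real.norm_eq_abs, Real.norm_of_nonneg dist_nonneg]

end Slice

variable {Q : Set (ℝ × X)} {u : ℝ × X → ℝ} {z : ℝ × X}

lemma LocLipOn.isBoundedUnder_slopeT (hu : LocLipOn Q u) (hQ : IsOpen Q) (hz : z ∈ Q) :
    IsBoundedUnder (· ≤ ·) (𝓝[Q] z) (slopeT u) := by
  obtain ⟨K, t, ht, hK⟩ := hu z hz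
  rw [hQ.nhdsWithin_eq hz] at ht ⊢
  refine isBoundedUnder_of_eventually_le (a := (K : ℝ)) ?_
  filter_upwards [eventually_mem_nhds_iff.2 ht] with w hw
  exact mslope_le_of_eventually K.2 <|
    (eventually_abs_slice_sub_le_of_lipschitzOnWith hK hw).filter_mono nhdsWithin_le_nhds

lemma LocLipOn.slopeT_le_uscEnvR (hu : LocLipOn Q u) (hQ : IsOpen Q) (hz : z ∈ Q) :
    slopeT u z ≤ uscEnvR Q (slopeT u) z :=
  le_uscEnvR hz (hu.isBoundedUnder_slopeT hQ hz)

lemma abs_slopeT_sub_slopeT_le_of_isLocalMax_sub {ψ₁ ψ₂ φ₁ φ₂ : ℝ × X → ℝ} (hQ : IsOpen Q)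
    (hψ₁ : LocLipOn Q ψ₁) (hψ₂ : LocLipOn Q ψ₂) (hφ₁ : LocLipOn Q φ₁) (hφ₂ : LocLipOn Q φ₂)
    (hz : z ∈ Q) (hup : slopeUpT ψ₁ z = slopeT ψ₁ z) (hdown : slopeDownT φ₁ z = slopeT φ₁ z)
    (hmax : IsLocalMax (ψ₁ + ψ₂ - (φ₁ + φ₂)) z) :
    |slopeT ψ₁ z - slopeT φ₁ z| ≤ slopeT ψ₂ z + slopeT φ₂ z :=
  abs_mslope_sub_mslope_le_of_isLocalMax_sub
    (hψ₁.pointwiseLipschitzAt_slice hQ hz) (hψ₂.pointwiseLipschitzAt_slice hQ hz)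
    (hφ₁.pointwiseLipschitzAt_slice hQ hz) (hφ₂.pointwiseLipschitzAt_slice hQ hz) hup hdown
    (IsLocalMax.comp_continuous (g := fun y => (z.1, y)) hmax
      (Continuous.prodMk_right z.1).continuousAt)

end LocLip

lemma timeDeriv_eq_of_isLocalMax_sub {Y : Type*} [TopologicalSpace Y] {u v : ℝ × Y → ℝ}
    {z : ℝ × Y} (hu : DifferentiableAt ℝ (fun s => u (s, z.2)) z.1)
    (hv : DifferentiableAt ℝ (fun s => v (s, z.2)) z.1) (hmax : IsLocalMax (u - v) z) :
    timeDeriv u z = timeDeriv v z := by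
  have hslice : IsLocalMax ((fun s => u (s, z.2)) - fun s => v (s, z.2)) z.1 :=
    IsLocalMax.comp_continuous (g := fun s => (s, z.2)) hmax
      (Continuous.prodMk_left z.2).continuousAt
  have hderiv := hslice.deriv_eq_zero
  rw [deriv_sub hu hv] at hderiv
  exact sub_eq_zero.1 hderiv

section Hamiltonian

lemma image_add_mul_Icc_eq_closedBall {r : ℝ} (hr : 0 ≤ r) (a : ℝ) :
    (fun t => a + r * t) '' Icc (-1) 1 = closedBall a r := by
  calc (fun t => a + r * t) '' Icc (-1) 1 = (a + ·) '' ((r * ·) '' Icc (-1) 1) :=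
        (image_image _ _ _).symm
    _ = closedBall a r := by
      rw [image_mul_left_Icc hr (by norm_num), image_const_add_Icc, Real.closedBall_eq_Icc]
      simp only [mul_neg, mul_one, sub_eq_add_neg]

variable {Y : Type*} {F : ℝ × Y → ℝ → ℝ → ℝ} {z : ℝ × Y} {a b q r s : ℝ}

lemma Fr_eq_sSup (hr : 0 ≤ r) : Fr F r z a q = sSup ((F z · q) '' closedBall a r) := by
  rw [Fr, if_pos hr, ← image_add_mul_Icc_eq_closedBall hr, image_image]

lemma Fr_neg_eq_sInf (hr : 0 ≤ r) : Fr F (-r) z a q = sInf ((F z · q) '' closedBall a r) := by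
  rcases hr.eq_or_lt with rfl | hr
  · simp [Fr]
  · have hsymm : (fun t => a + -r * t) '' Icc (-1) 1 = closedBall a r := by
      rw [← image_add_mul_Icc_eq_closedBall hr.le, ← neg_neg (1 : ℝ), ← image_neg_Icc, image_image]
      simp
    rw [Fr, if_neg (by linarith), ← hsymm, image_image]

theorem Fr_neg_le_Fr (hF : Continuous (F z · q)) (hr : 0 ≤ r) (hs : 0 ≤ s)
    (hab : dist a b ≤ r + s) : Fr F (-s) z b q ≤ Fr F r z a q := by
  obtain ⟨p, hap, hpb⟩ := exists_dist_le_le hr hs (by rwa [add_comm])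
  have hcompact (c ρ : ℝ) : IsCompact ((F z · q) '' closedBall c ρ) :=
    (isCompact_closedBall c ρ).image hF
  calc Fr F (-s) z b q = sInf ((F z · q) '' closedBall b s) := Fr_neg_eq_sInf hs
    _ ≤ F z p q := csInf_le (hcompact b s).bddBelow (mem_image_of_mem _ hpb)
    _ ≤ sSup ((F z · q) '' closedBall a r) :=
      le_csSup (hcompact a r).bddAbove (mem_image_of_mem _ (mem_closedBall'.2 hap))
    _ = Fr F r z a q := (Fr_eq_sSup hr).symm

end Hamiltonian

theorem stmt6_general {Q : Set (ℝ × X)} (hQ : IsOpen Q) {F : ℝ × X → ℝ → ℝ → ℝ}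
    (hF : ∀ z ∈ Q, ∀ q, Continuous (F z · q)) {ψ₁ ψ₂ : ℝ × X → ℝ}
    (hψ₁ : LocLipOn Q ψ₁) (hψ₂ : LocLipOn Q ψ₂) (hup : EqOn (slopeUpT ψ₁) (slopeT ψ₁) Q)
    (hdiff : ∀ z ∈ Q, DifferentiableAt ℝ (fun s => ψ₁ (s, z.2) + ψ₂ (s, z.2)) z.1)
    (hineq : ∀ z ∈ Q, Fr F (uscEnvR Q (slopeT ψ₂) z) z (slopeT ψ₁ z)
      (timeDeriv (fun w => ψ₁ w + ψ₂ w) z) ≤ 0) :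
    IsSubsol Q F (fun z => ((ψ₁ z + ψ₂ z : ℝ) : EReal)) := by
  rintro φ₁ φ₂ ⟨⟨hφ₁, hφ₁_diff, -⟩, hdown, -⟩ ⟨hφ₂, hφ₂_diff, -⟩ z hz ⟨R, hR, heq, hle⟩
  have hmax : IsLocalMax (ψ₁ + ψ₂ - (φ₁ + φ₂)) z :=
    isLocalMax_sub_of_uscEnv_le (hQ.mem_nhds hz) (hψ₁.continuousOn.add hψ₂.continuousOn) hR heq hle
  have htime : timeDeriv (fun w => ψ₁ w + ψ₂ w) z = timeDeriv (fun w => φ₁ w + φ₂ w) z :=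
    timeDeriv_eq_of_isLocalMax_sub (hdiff z hz) ((hφ₁_diff z hz).add (hφ₂_diff z hz)) hmax
  have hslope : |slopeT ψ₁ z - slopeT φ₁ z| ≤ slopeT ψ₂ z + slopeT φ₂ z :=
    abs_slopeT_sub_slopeT_le_of_isLocalMax_sub hQ hψ₁ hψ₂ hφ₁ hφ₂ hz (hup hz) (hdown hz) hmax
  have hψ₂_le := hψ₂.slopeT_le_uscEnvR hQ hz
  have hφ₂_le := hφ₂.slopeT_le_uscEnvR hQ hz
  calc Fr F (-uscEnvR Q (slopeT φ₂) z) z (slopeT φ₁ z) (timeDeriv (fun w => φ₁ w + φ₂ w) z)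
      ≤ Fr F (uscEnvR Q (slopeT ψ₂) z) z (slopeT ψ₁ z) (timeDeriv (fun w => φ₁ w + φ₂ w) z) :=
        Fr_neg_le_Fr (hF z hz _) ((mslope_nonneg _ _).trans hψ₂_le)
          ((mslope_nonneg _ _).trans hφ₂_le) (hslope.trans (add_le_add hψ₂_le hφ₂_le))
    _ ≤ 0 := htime ▸ hineq z hz

/-- strong solutions are viscosity subsolutions. -/
theorem stmt6 [CompleteSpace X] (hgeo : IsGeodesicSpace X)
    (Q : Set (ℝ × X)) (hQ : IsOpen Q)
    (F : (ℝ × X) → ℝ → ℝ → ℝ)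
    (hFc : ContinuousOn (fun w : (ℝ × X) × ℝ × ℝ => F w.1 w.2.1 w.2.2)
      (Q ×ˢ ((Set.univ : Set ℝ) ×ˢ (Set.univ : Set ℝ))))
    (hFe : ∀ z p q, F z (-p) q = F z p q)
    (hFconv : ∀ z q, ConvexOn ℝ Set.univ fun p => F z p q)
    (ψ₁ ψ₂ : ℝ × X → ℝ)
    (hψ₁ : IsC1UpperQ Q ψ₁) (hψ₂ : IsCQ Q ψ₂)
    (hineq : ∀ z ∈ Q,
      Fr F (uscEnvR Q (slopeT ψ₂) z) z (slopeT ψ₁ z)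
        (timeDeriv (fun w => ψ₁ w + ψ₂ w) z) ≤ 0) :
    IsSubsol Q F (fun z => ((ψ₁ z + ψ₂ z : ℝ) : EReal)) := by
  have hF (z) (hz : z ∈ Q) (q : ℝ) : Continuous (F z · q) :=
    hFc.comp_continuous (f := fun p => (z, p, q)) (by fun_prop) fun p => by simp [hz]
  exact stmt6_general hQ hF hψ₁.1.1 hψ₂.1 hψ₁.2.1
    (fun z hz => (hψ₁.1.2.1 z hz).add (hψ₂.2.1 z hz)) hineq
end
end
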